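/- Caccioppoli-type inequality (inequality (3.3) of Lemma 3.1, smooth interior form): let D ⊆ D* be open, let δ > 0, and suppose there is a continuously differentiable η : ℝ^d → ℝ with support a compact subset of D*, 0 ≤ η ≤ 1 everywhere, η ≡ 1 on D, and |∇η(x)| ≤ δ⁻¹ for all x. Then every u that is B-harmonic on D* satisfies ‖u‖_{a,D} ≤ √(2 a_max + 1) · δ⁻¹ · ‖u‖_{L²(D* \ D)} + √( 2‖div b‖_∞ + ‖b‖_∞² (1 + a_min⁻¹) ) · ‖u‖_{L²(D*)}. -/

import Mathlib

open MeasureTheory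

/-- Partial derivative in direction `i`. -/
noncomputable def pd (d : ℕ) (i : Fin d) (f : (Fin d → ℝ) → ℝ) (x : Fin d → ℝ) : ℝ :=
  fderiv ℝ f x (Pi.single i 1)

/-- The integrand `A ∇f · ∇g` at a point. -/
noncomputable def aForm (d : ℕ) (A : (Fin d → ℝ) → Matrix (Fin d) (Fin d) ℝ)
    (f g : (Fin d → ℝ) → ℝ) (x : Fin d → ℝ) : ℝ :=
  ∑ i, ∑ j, A x i j * pd d j f x * pd d i g x

/-- Divergence of a vector field. -/
noncomputable def divg (d : ℕ) (b : (Fin d → ℝ) → Fin d → ℝ) (x : Fin d → ℝ) : ℝ :=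
  ∑ i, fderiv ℝ (fun y => b y i) x (Pi.single i 1)

/-- `u` is B-harmonic on `Dstar`: it is `C¹` and
`∫_{D*} (A ∇u)·∇v − u b·∇v dx = 0` for all `C¹` functions `v` with compact support in `Dstar`. -/
def BHarmonic (d : ℕ) (Dstar : Set (Fin d → ℝ))
    (A : (Fin d → ℝ) → Matrix (Fin d) (Fin d) ℝ)
    (b : (Fin d → ℝ) → Fin d → ℝ) (u : (Fin d → ℝ) → ℝ) : Prop :=
  ContDiff ℝ 1 u ∧
  ∀ v : (Fin d → ℝ) → ℝ, ContDiff ℝ 1 v → HasCompactSupport v → tsupport v ⊆ Dstar →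
    ∫ x in Dstar, (aForm d A u v x - u x * ∑ i, b x i * pd d i v x) = 0

lemma pd_mul_aux {d : ℕ} (i : Fin d) {f g : (Fin d → ℝ) → ℝ} (hf : ContDiff ℝ 1 f)
    (hg : ContDiff ℝ 1 g) (x : Fin d → ℝ) :
    pd d i (fun y => f y * g y) x = f x * pd d i g x + g x * pd d i f x := by
  unfold pd
  rw [fderiv_fun_mul (hf.differentiable one_ne_zero x) (hg.differentiable one_ne_zero x)]
  simp

lemma pd_cont_aux {d : ℕ} (i : Fin d) {f : (Fin d → ℝ) → ℝ} (hf : ContDiff ℝ 1 f) :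
    Continuous (pd d i f) := by
  unfold pd
  exact (hf.continuous_fderiv one_ne_zero).clm_apply continuous_const

lemma aForm_cont_aux {d : ℕ} {A : (Fin d → ℝ) → Matrix (Fin d) (Fin d) ℝ} (hA : Continuous A)
    {f g : (Fin d → ℝ) → ℝ} (hf : ContDiff ℝ 1 f) (hg : ContDiff ℝ 1 g) :
    Continuous (aForm d A f g) := by
  unfold aForm
  refine continuous_finsetSum _ fun i _ => continuous_finsetSum _ fun j _ => ?_
  exact ((hA.matrix_elem i j).mul (pd_cont_aux j hf)).mul (pd_cont_aux i hg)

lemma aForm_id_aux {d : ℕ} {A : (Fin d → ℝ) → Matrix (Fin d) (Fin d) ℝ}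
    (hAs : ∀ x, (A x).IsSymm)
    {u η : (Fin d → ℝ) → ℝ} (hu : ContDiff ℝ 1 u) (hη : ContDiff ℝ 1 η) (x : Fin d → ℝ) :
    aForm d A u (fun y => η y * (η y * u y)) x
      = aForm d A (fun y => η y * u y) (fun y => η y * u y) x - u x ^ 2 * aForm d A η η x := by
  have hsw : aForm d A u η x = aForm d A η u x := by
    unfold aForm
    rw [Finset.sum_comm]
    refine Finset.sum_congr rfl fun i _ => Finset.sum_congr rfl fun j _ => ?_
    rw [(hAs x).apply]; ring
  have e1 : aForm d A u (fun y => η y * (η y * u y)) x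
      = η x ^ 2 * aForm d A u u x + 2 * η x * u x * aForm d A u η x := by
    unfold aForm
    simp only [pd_mul_aux _ hη (hη.mul hu), pd_mul_aux _ hη hu, Finset.mul_sum,
      ← Finset.sum_add_distrib]
    refine Finset.sum_congr rfl fun i _ => Finset.sum_congr rfl fun j _ => ?_
    ring
  have e2 : aForm d A (fun y => η y * u y) (fun y => η y * u y) x
      = η x ^ 2 * aForm d A u u x + η x * u x * aForm d A u η x + η x * u x * aForm d A η u x
        + u x ^ 2 * aForm d A η η x := by
    unfold aForm
    simp only [pd_mul_aux _ hη hu, Finset.mul_sum,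
      ← Finset.sum_add_distrib]
    refine Finset.sum_congr rfl fun i _ => Finset.sum_congr rfl fun j _ => ?_
    ring
  rw [e1, e2, hsw]; ring

lemma drift_id_aux {d : ℕ} (b : (Fin d → ℝ) → Fin d → ℝ)
    {u η : (Fin d → ℝ) → ℝ} (hu : ContDiff ℝ 1 u) (hη : ContDiff ℝ 1 η) (x : Fin d → ℝ) :
    u x * ∑ i, b x i * pd d i (fun y => η y * (η y * u y)) x
      = (1/2) * (∑ i, b x i * pd d i (fun y => (η y * u y) * (η y * u y)) x)
        + η x * u x ^ 2 * ∑ i, b x i * pd d i η x := by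
  simp only [pd_mul_aux _ hη (hη.mul hu), pd_mul_aux _ (hη.mul hu) (hη.mul hu),
    pd_mul_aux _ hη hu, Finset.mul_sum, ← Finset.sum_add_distrib]
  refine Finset.sum_congr rfl fun i _ => ?_
  ring

lemma div_int_aux {d : ℕ} {b : (Fin d → ℝ) → Fin d → ℝ} (hb : ContDiff ℝ 1 b)
    {g : (Fin d → ℝ) → ℝ} (hg : ContDiff ℝ 1 g) (hc : HasCompactSupport g) :
    ∫ x, ((∑ i, b x i * pd d i g x) + g x * divg d b x) = 0 := by
  have hbi : ∀ i, ContDiff ℝ 1 (fun y => b y i) := fun i => contDiff_pi.1 hb i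
  have hpc : ∀ i, HasCompactSupport (pd d i g) := fun i => by
    unfold pd
    exact hc.fderiv_apply (𝕜 := ℝ) _
  have I1 : ∀ i, Integrable (fun x => b x i * pd d i g x) := fun i =>
    ((hbi i).continuous.mul (pd_cont_aux i hg)).integrable_of_hasCompactSupport (hpc i).mul_left
  have I2 : ∀ i, Integrable (fun x => pd d i (fun y => b y i) x * g x) := fun i =>
    ((pd_cont_aux i (hbi i)).mul hg.continuous).integrable_of_hasCompactSupport hc.mul_left
  have I3 : ∀ i, Integrable (fun x => b x i * g x) := fun i =>
    ((hbi i).continuous.mul hg.continuous).integrable_of_hasCompactSupport hc.mul_left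
  have key : ∀ i, ∫ x, b x i * pd d i g x = - ∫ x, pd d i (fun y => b y i) x * g x := fun i =>
    integral_mul_fderiv_eq_neg_fderiv_mul_of_integrable (I2 i) (I1 i) (I3 i)
      (fun x _ => (hbi i).differentiable one_ne_zero x)
      (fun x _ => hg.differentiable one_ne_zero x)
  have e : ∀ x, (∑ i, b x i * pd d i g x) + g x * divg d b x
      = ∑ i, (b x i * pd d i g x + pd d i (fun y => b y i) x * g x) := fun x => by
    unfold divg
    rw [Finset.sum_add_distrib, Finset.mul_sum]
    congr 1
    exact Finset.sum_congr rfl fun i _ => mul_comm _ _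
  simp only [e]
  have I4 : ∀ i, Integrable (fun x => b x i * pd d i g x + pd d i (fun y => b y i) x * g x) :=
    fun i => (I1 i).add (I2 i)
  rw [integral_finsetSum _ fun i _ => I4 i]
  refine Finset.sum_eq_zero fun i _ => ?_
  rw [integral_add (I1 i) (I2 i), key i]; ring

theorem caccioppoli_inequality
    (d : ℕ) (hd : 0 < d)
    (Dstar : Set (Fin d → ℝ)) (hopen : IsOpen Dstar) (hbdd : Bornology.IsBounded Dstar)
    (A : (Fin d → ℝ) → Matrix (Fin d) (Fin d) ℝ)
    (hAcont : Continuous A) (hAsymm : ∀ x, (A x).IsSymm)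
    (amin amax : ℝ) (h0 : 0 < amin) (h1 : amin ≤ amax)
    (hellip : ∀ (x ξ : Fin d → ℝ),
      amin * ∑ i, ξ i ^ 2 ≤ (∑ i, ∑ j, A x i j * ξ j * ξ i) ∧
      (∑ i, ∑ j, A x i j * ξ j * ξ i) ≤ amax * ∑ i, ξ i ^ 2)
    (b : (Fin d → ℝ) → Fin d → ℝ) (hb : ContDiff ℝ 1 b)
    (bBound divbBound : ℝ)
    (hbB : ∀ x, Real.sqrt (∑ i, b x i ^ 2) ≤ bBound)
    (hdivbB : ∀ x, |divg d b x| ≤ divbBound)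
    (D : Set (Fin d → ℝ)) (hDopen : IsOpen D) (hDsub : D ⊆ Dstar)
    (δ : ℝ) (hδ : 0 < δ)
    (η : (Fin d → ℝ) → ℝ) (hη : ContDiff ℝ 1 η)
    (hηc : HasCompactSupport η) (hηs : tsupport η ⊆ Dstar)
    (hη01 : ∀ x, 0 ≤ η x ∧ η x ≤ 1)
    (hηD : ∀ x ∈ D, η x = 1)
    (hηgrad : ∀ x, Real.sqrt (∑ i, (pd d i η x) ^ 2) ≤ δ⁻¹)
    (u : (Fin d → ℝ) → ℝ) (hu : BHarmonic d Dstar A b u) :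
    Real.sqrt (∫ x in D, aForm d A u u x)
      ≤ Real.sqrt (2 * amax + 1) * δ⁻¹ * Real.sqrt (∫ x in Dstar \ D, u x ^ 2)
        + Real.sqrt (2 * divbBound + bBound ^ 2 * (1 + amin⁻¹)) *
            Real.sqrt (∫ x in Dstar, u x ^ 2) := by
  obtain ⟨huC, hut⟩ := hu
  have hw : ContDiff ℝ 1 (fun y => η y * u y) := hη.mul huC
  have hv : ContDiff ℝ 1 (fun y => η y * (η y * u y)) := hη.mul hw
  have hg : ContDiff ℝ 1 (fun y => (η y * u y) * (η y * u y)) := hw.mul hw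
  have hbi : ∀ i, ContDiff ℝ 1 (fun y => b y i) := fun i => contDiff_pi.1 hb i
  have hgc : HasCompactSupport (fun y => (η y * u y) * (η y * u y)) :=
    HasCompactSupport.mul_right (f := fun y => η y * u y) hηc.mul_right
  have hgs : tsupport (fun y => (η y * u y) * (η y * u y)) ⊆ Dstar :=
    (closure_mono (fun x hx => by
      simp only [Function.mem_support] at hx ⊢
      intro h; simp [h] at hx)).trans hηs
  have hF := hut _ hv hηc.mul_right
    ((tsupport_mul_subset_left (f := η) (g := fun y => η y * u y)).trans hηs)
  have hdivc : Continuous (divg d b) := by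
    unfold divg
    exact continuous_finsetSum _ fun i _ => pd_cont_aux i (hbi i)
  have hint : ∀ f : (Fin d → ℝ) → ℝ, Continuous f → IntegrableOn f Dstar := fun f hf =>
    (hf.continuousOn.integrableOn_compact hbdd.isCompact_closure).mono_set subset_closure
  have hsumc : ∀ f : (Fin d → ℝ) → ℝ, ContDiff ℝ 1 f →
      Continuous (fun x => ∑ i, b x i * pd d i f x) := fun f hf =>
    continuous_finsetSum _ fun i _ => (hbi i).continuous.mul (pd_cont_aux i hf)
  have hG : ∫ x in Dstar, ((∑ i, b x i * pd d i (fun y => (η y * u y) * (η y * u y)) x)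
      + (η x * u x) * (η x * u x) * divg d b x) = 0 := by
    rw [setIntegral_eq_integral_of_forall_compl_eq_zero]
    · exact div_int_aux hb hg hgc
    · intro x hx
      have hx' : x ∉ tsupport (fun y => (η y * u y) * (η y * u y)) := fun h => hx (hgs h)
      have h1 : (η x * u x) * (η x * u x) = 0 :=
        image_eq_zero_of_notMem_tsupport (f := fun y => (η y * u y) * (η y * u y)) hx'
      have h2 : fderiv ℝ (fun y => (η y * u y) * (η y * u y)) x = 0 :=
        fderiv_of_notMem_tsupport ℝ hx'
      rw [h1]
      simp [pd, h2]
  have hδ' : 0 < δ⁻¹ := inv_pos.2 hδ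
  have hb0 : 0 ≤ bBound := (Real.sqrt_nonneg _).trans (hbB 0)
  have hd0 : 0 ≤ divbBound := (abs_nonneg _).trans (hdivbB 0)
  have hb2 : ∀ x, ∑ i, b x i ^ 2 ≤ bBound ^ 2 := fun x => (Real.sqrt_le_left hb0).1 (hbB x)
  have hη2 : ∀ x, ∑ i, (pd d i η x) ^ 2 ≤ δ⁻¹ ^ 2 := fun x =>
    (Real.sqrt_le_left hδ'.le).1 (hηgrad x)
  have haη : ∀ x, aForm d A η η x ≤ amax * δ⁻¹ ^ 2 := fun x =>
    ((hellip x (fun i => pd d i η x)).2).trans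
      (mul_le_mul_of_nonneg_left (hη2 x) (h0.le.trans h1))
  have hpos : ∀ f x, 0 ≤ aForm d A f f x := fun f x =>
    le_trans (mul_nonneg h0.le (Finset.sum_nonneg fun i _ => sq_nonneg _))
      (hellip x (fun i => pd d i f x)).1
  have hbη : ∀ x, ∑ i, b x i * pd d i η x ≤ (bBound ^ 2 + δ⁻¹ ^ 2) / 2 := fun x => by
    have : ∑ i, b x i * pd d i η x ≤ ∑ i, (b x i ^ 2 / 2 + pd d i η x ^ 2 / 2) :=
      Finset.sum_le_sum fun i _ => by nlinarith [sq_nonneg (b x i - pd d i η x)]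
    rw [Finset.sum_add_distrib, ← Finset.sum_div, ← Finset.sum_div] at this
    linarith [hb2 x, hη2 x]
  set C1 : ℝ := (2 * amax + 1) * δ⁻¹ ^ 2 with hC1
  set C2 : ℝ := 2 * divbBound + bBound ^ 2 * (1 + amin⁻¹) with hC2
  have hC2a : divbBound / 2 + bBound ^ 2 / 2 ≤ C2 := by
    have : 0 ≤ bBound ^ 2 * amin⁻¹ := by positivity
    rw [hC2]; nlinarith [sq_nonneg bBound]
  set F : (Fin d → ℝ) → ℝ := fun x => aForm d A u (fun y => η y * (η y * u y)) x
    - u x * ∑ i, b x i * pd d i (fun y => η y * (η y * u y)) x with hFdef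
  set G : (Fin d → ℝ) → ℝ := fun x =>
    (∑ i, b x i * pd d i (fun y => (η y * u y) * (η y * u y)) x)
      + (η x * u x) * (η x * u x) * divg d b x with hGdef
  have hFc : Continuous F :=
    (aForm_cont_aux hAcont huC hv).sub (huC.continuous.mul (hsumc _ hv))
  have hGc : Continuous G := (hsumc _ hg).add (hg.continuous.mul hdivc)
  have hFG : ∀ x, F x + (1/2) * G x = aForm d A (fun y => η y * u y) (fun y => η y * u y) x
      - u x ^ 2 * aForm d A η η x - η x * u x ^ 2 * (∑ i, b x i * pd d i η x)
      + (1/2) * (η x ^ 2 * u x ^ 2 * divg d b x) := fun x => by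
    simp only [hFdef, hGdef, aForm_id_aux hAsymm huC hη, drift_id_aux b huC hη]
    ring
  have hdivx : ∀ x, -(1/2 * (η x ^ 2 * u x ^ 2 * divg d b x)) ≤ divbBound / 2 * u x ^ 2 :=
    fun x => by
      obtain ⟨e0, e1⟩ := hη01 x
      have hl := (abs_le.1 (hdivbB x)).1
      have ha : η x ^ 2 * u x ^ 2 * (-divg d b x) ≤ η x ^ 2 * u x ^ 2 * divbBound :=
        mul_le_mul_of_nonneg_left (by linarith) (by positivity)
      have hb : η x ^ 2 * (u x ^ 2 * divbBound) ≤ 1 * (u x ^ 2 * divbBound) :=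
        mul_le_mul_of_nonneg_right (by nlinarith) (by positivity)
      linarith
  have hpt : ∀ x, D.indicator (aForm d A u u) x
      ≤ (F x + (1/2) * G x) + (Dᶜ.indicator (fun x => C1 * u x ^ 2) x + C2 * u x ^ 2) := by
    intro x
    have hC2u : (divbBound / 2 + bBound ^ 2 / 2) * u x ^ 2 ≤ C2 * u x ^ 2 :=
      mul_le_mul_of_nonneg_right hC2a (sq_nonneg _)
    rw [hFG x]
    by_cases hx : x ∈ D
    · have hloc : η =ᶠ[nhds x] fun _ => (1:ℝ) :=
        Filter.eventually_of_mem (hDopen.mem_nhds hx) hηD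
      have hp : ∀ i, pd d i η x = 0 := fun i => by
        unfold pd; rw [hloc.fderiv_eq]; simp
      have e1 : aForm d A (fun y => η y * u y) (fun y => η y * u y) x = aForm d A u u x := by
        unfold aForm
        simp [pd_mul_aux _ hη huC, hp, hηD x hx]
      have e2 : aForm d A η η x = 0 := by unfold aForm; simp [hp]
      have e3 : ∑ i, b x i * pd d i η x = 0 := by simp [hp]
      rw [Set.indicator_of_mem hx, Set.indicator_of_notMem (by simpa using hx), e1, e2, e3]
      have : 0 ≤ bBound ^ 2 / 2 * u x ^ 2 := by positivity
      linarith [hdivx x]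
    · rw [Set.indicator_of_notMem hx, Set.indicator_of_mem (by simpa using hx)]
      obtain ⟨e0, e1⟩ := hη01 x
      have t1 : u x ^ 2 * aForm d A η η x ≤ u x ^ 2 * (amax * δ⁻¹ ^ 2) :=
        mul_le_mul_of_nonneg_left (haη x) (sq_nonneg _)
      have t2 : η x * u x ^ 2 * (∑ i, b x i * pd d i η x)
          ≤ η x * u x ^ 2 * ((bBound ^ 2 + δ⁻¹ ^ 2) / 2) :=
        mul_le_mul_of_nonneg_left (hbη x) (by positivity)
      have t3 : η x * (u x ^ 2 * ((bBound ^ 2 + δ⁻¹ ^ 2) / 2))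
          ≤ 1 * (u x ^ 2 * ((bBound ^ 2 + δ⁻¹ ^ 2) / 2)) :=
        mul_le_mul_of_nonneg_right e1 (by positivity)
      have t4 : 0 ≤ u x ^ 2 * (amax * δ⁻¹ ^ 2) :=
        mul_nonneg (sq_nonneg _) (mul_nonneg (h0.le.trans h1) (sq_nonneg _))
      have t5 : 0 ≤ u x ^ 2 * δ⁻¹ ^ 2 := by positivity
      have t6 := hpos (fun y => η y * u y) x
      have t7 := hdivx x
      have t8 : C1 * u x ^ 2 = 2 * (u x ^ 2 * (amax * δ⁻¹ ^ 2)) + u x ^ 2 * δ⁻¹ ^ 2 := by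
        rw [hC1]; ring
      show 0 ≤ _ + (C1 * u x ^ 2 + C2 * u x ^ 2)
      linarith
  have hDm := hDopen.measurableSet
  have hu2 : Continuous (fun x => u x ^ 2) := huC.continuous.pow 2
  have iU := hint _ hu2
  have iF := hint F hFc
  have iG := hint G hGc
  have iC1 : IntegrableOn (Dᶜ.indicator (fun x => C1 * u x ^ 2)) Dstar :=
    (iU.const_mul C1).indicator hDm.compl
  have iL : IntegrableOn (D.indicator (aForm d A u u)) Dstar :=
    (hint _ (aForm_cont_aux hAcont huC huC)).indicator hDm
  have hFG1 : Integrable (fun x => F x + (1/2) * G x) (volume.restrict Dstar) :=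
    iF.add (iG.const_mul (1/2))
  have hR1 : Integrable (fun x => Dᶜ.indicator (fun x => C1 * u x ^ 2) x + C2 * u x ^ 2)
      (volume.restrict Dstar) := iC1.add (iU.const_mul C2)
  have hmain : ∫ x in D, aForm d A u u x
      ≤ C1 * (∫ x in Dstar \ D, u x ^ 2) + C2 * ∫ x in Dstar, u x ^ 2 := by
    have hm := integral_mono (μ := volume.restrict Dstar) iL (hFG1.add hR1) hpt
    simp only [Pi.add_apply] at hm
    rw [integral_add hFG1 hR1, integral_add iF (iG.const_mul (1/2)),
      integral_add iC1 (iU.const_mul C2), integral_const_mul, integral_const_mul,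
      setIntegral_indicator hDm, setIntegral_indicator hDm.compl, integral_const_mul,
      Set.inter_eq_self_of_subset_right hDsub, ← Set.sdiff_eq, hF, hG] at hm
    linarith
  have hX : 0 ≤ ∫ x in Dstar \ D, u x ^ 2 := integral_nonneg fun x => sq_nonneg _
  have hY : 0 ≤ ∫ x in Dstar, u x ^ 2 := integral_nonneg fun x => sq_nonneg _
  have hamax : 0 ≤ 2 * amax + 1 := by linarith
  have hC20 : 0 ≤ C2 := le_trans (by positivity) hC2a
  refine Real.sqrt_le_iff.2 ⟨by positivity, hmain.trans ?_⟩
  have s1 := Real.sq_sqrt hX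
  have s2 := Real.sq_sqrt hY
  have s3 := Real.sq_sqrt hamax
  have s4 := Real.sq_sqrt hC20
  have hcross : 0 ≤ (Real.sqrt (2 * amax + 1) * δ⁻¹ * Real.sqrt (∫ x in Dstar \ D, u x ^ 2)) *
      (Real.sqrt C2 * Real.sqrt (∫ x in Dstar, u x ^ 2)) := by positivity
  rw [add_sq, mul_pow, mul_pow, mul_pow, s1, s2, s3, s4]
  linarith
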